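/- Let $c < -\frac{3}{2}$ be a real number. Then the cubic equation $2E(c-E)^2 + 1 = 0$ has exactly three real solutions $E_1 < E_2 < E_3$, all negative, and they satisfy $E_1 < c < E_2 < -\frac{1}{2} < E_3 < 0$. -/

import Mathlib

/-! The left-hand side `2E(c - E)² + 1` is the squared eccentricity of a Kepler orbit. It equals `1`
at the collision value `E = c` (where `L = 0`) and at the parabolic value `E = 0`, is negative for
very negative `E`, and equals `(c + 3/2)(1/2 - c) < 0` at `E = -1/2`, the double root in the
borderline case `c = -3/2`. These sign changes give three roots, and a cubic has no more. -/

section CubicRoots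

variable {R : Type*} [CommRing R] [IsDomain R]

theorem eq_or_eq_or_eq_of_cubic_isRoot {P : Cubic R} (ha : P.a ≠ 0) {x y z w : R}
    (hxy : x ≠ y) (hxz : x ≠ z) (hyz : y ≠ z)
    (hx : P.toPoly.IsRoot x) (hy : P.toPoly.IsRoot y) (hz : P.toPoly.IsRoot z)
    (hw : P.toPoly.IsRoot w) : w = x ∨ w = y ∨ w = z := by
  classical
  have hP : P.toPoly ≠ 0 := Cubic.ne_zero_of_a_ne_zero ha
  have hroots : P.toPoly.roots = ({x, y, z} : Finset R).val := by
    refine Polynomial.roots_eq_of_natDegree_le_card_of_ne_zero ?_ ?_ hP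
    · simp [hx.eq_zero, hy.eq_zero, hz.eq_zero]
    · rw [Cubic.natDegree_of_a_ne_zero ha, Finset.card_eq_three.mpr ⟨x, y, z, hxy, hxz, hyz, rfl⟩]
  have hmem : w ∈ P.toPoly.roots := (Polynomial.mem_roots hP).mpr hw
  simpa [hroots] using hmem

end CubicRoots

/-- The squared eccentricity `e² = 2EL² + 1` of the Kepler orbit of energy `E` and angular momentum
`L = E - c`, that is, on the level `H = c` of the rotating Kepler Hamiltonian. Its zeros are the
energies of the circular orbits; where it is negative, no orbit exists. -/
def eccentricitySq (c E : ℝ) : ℝ := 2 * E * (c - E) ^ 2 + 1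

section EccentricitySq

open Set

variable {c m E : ℝ}

theorem eccentricitySq_self (c : ℝ) : eccentricitySq c c = 1 := by simp [eccentricitySq]

theorem eccentricitySq_zero (c : ℝ) : eccentricitySq c 0 = 1 := by simp [eccentricitySq]

theorem continuous_eccentricitySq (c : ℝ) : Continuous (eccentricitySq c) := by
  unfold eccentricitySq
  fun_prop

theorem neg_of_eccentricitySq_lt_one (h : eccentricitySq c E < 1) : E < 0 := by
  contrapose! h
  have : 0 ≤ 2 * E * (c - E) ^ 2 := by positivity
  unfold eccentricitySq
  linarith

theorem eccentricitySq_neg_abs_sub_one_neg (c : ℝ) : eccentricitySq c (-|c| - 1) < 0 := by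
  have hL : 1 ≤ (c - (-|c| - 1)) ^ 2 := one_le_pow₀ (by linarith [neg_abs_le c])
  unfold eccentricitySq
  nlinarith [abs_nonneg c]

theorem eccentricitySq_neg_half_neg (hc : c < -(3 / 2)) : eccentricitySq c (-(1 / 2)) < 0 :=
  calc eccentricitySq c (-(1 / 2)) = (c + 3 / 2) * (1 / 2 - c) := by unfold eccentricitySq; ring
    _ < 0 := mul_neg_of_neg_of_pos (by linarith) (by linarith)

theorem exists_lt_eccentricitySq_eq_zero (c : ℝ) : ∃ E < c, eccentricitySq c E = 0 := by
  have hle : -|c| - 1 ≤ c := by linarith [neg_abs_le c]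
  obtain ⟨E, hE, hzero⟩ := intermediate_value_Ioo hle (continuous_eccentricitySq c).continuousOn
    ⟨eccentricitySq_neg_abs_sub_one_neg c, eccentricitySq_self c ▸ one_pos⟩
  exact ⟨E, hE.2, hzero⟩

theorem exists_mem_Ioo_left_eccentricitySq_eq_zero (hcm : c ≤ m) (hm : eccentricitySq c m < 0) :
    ∃ E ∈ Ioo c m, eccentricitySq c E = 0 :=
  intermediate_value_Ioo' hcm (continuous_eccentricitySq c).continuousOn
    ⟨hm, eccentricitySq_self c ▸ one_pos⟩

theorem exists_mem_Ioo_right_eccentricitySq_eq_zero (hm : eccentricitySq c m < 0) :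
    ∃ E ∈ Ioo m 0, eccentricitySq c E = 0 :=
  have hm_neg : m < 0 := neg_of_eccentricitySq_lt_one (hm.trans one_pos)
  intermediate_value_Ioo hm_neg.le (continuous_eccentricitySq c).continuousOn
    ⟨hm, eccentricitySq_zero c ▸ one_pos⟩

theorem eq_or_eq_or_eq_of_eccentricitySq_eq_zero {E₁ E₂ E₃ : ℝ}
    (h₁₂ : E₁ ≠ E₂) (h₁₃ : E₁ ≠ E₃) (h₂₃ : E₂ ≠ E₃) (h₁ : eccentricitySq c E₁ = 0)
    (h₂ : eccentricitySq c E₂ = 0) (h₃ : eccentricitySq c E₃ = 0) (hE : eccentricitySq c E = 0) :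
    E = E₁ ∨ E = E₂ ∨ E = E₃ := by
  let P : Cubic ℝ := ⟨2, -4 * c, 2 * c ^ 2, 1⟩
  have heval (x : ℝ) : P.toPoly.eval x = eccentricitySq c x := by
    simp only [P, Cubic.toPoly, eccentricitySq, Polynomial.eval_add, Polynomial.eval_mul,
      Polynomial.eval_pow, Polynomial.eval_C, Polynomial.eval_X]
    ring
  rw [← heval] at h₁ h₂ h₃ hE
  exact eq_or_eq_or_eq_of_cubic_isRoot two_ne_zero h₁₂ h₁₃ h₂₃ h₁ h₂ h₃ hE

end EccentricitySq

/-- For `c < -3/2`, the cubic `2E(c-E)² + 1 = 0` has exactly three real roots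
`E₁ < E₂ < E₃`, all negative, satisfying `E₁ < c < E₂ < -1/2 < E₃ < 0`. -/
theorem stmt_1 (c : ℝ) (hc : c < -(3 / 2)) :
    ∃ E1 E2 E3 : ℝ, E1 < E2 ∧ E2 < E3 ∧
      2 * E1 * (c - E1) ^ 2 + 1 = 0 ∧
      2 * E2 * (c - E2) ^ 2 + 1 = 0 ∧
      2 * E3 * (c - E3) ^ 2 + 1 = 0 ∧
      (∀ E : ℝ, 2 * E * (c - E) ^ 2 + 1 = 0 → E = E1 ∨ E = E2 ∨ E = E3) ∧
      E1 < 0 ∧ E2 < 0 ∧ E3 < 0 ∧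
      E1 < c ∧ c < E2 ∧ E2 < -(1 / 2) ∧ -(1 / 2) < E3 ∧ E3 < 0 := by
  have hmid : eccentricitySq c (-(1 / 2)) < 0 := eccentricitySq_neg_half_neg hc
  obtain ⟨E1, h1c, h1⟩ := exists_lt_eccentricitySq_eq_zero c
  obtain ⟨E2, ⟨hc2, h2m⟩, h2⟩ :=
    exists_mem_Ioo_left_eccentricitySq_eq_zero (by linarith) hmid
  obtain ⟨E3, ⟨hm3, h30⟩, h3⟩ := exists_mem_Ioo_right_eccentricitySq_eq_zero hmid
  have h12 : E1 < E2 := h1c.trans hc2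
  have h23 : E2 < E3 := h2m.trans hm3
  exact ⟨E1, E2, E3, h12, h23, h1, h2, h3,
    fun _ ↦ eq_or_eq_or_eq_of_eccentricitySq_eq_zero h12.ne (h12.trans h23).ne h23.ne h1 h2 h3,
    h12.trans (h23.trans h30), h23.trans h30, h30, h1c, hc2, h2m, hm3, h30⟩
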